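/- For all x ∈ (0, π/2), (1/3)·1/(π/2 − x) − 2/(3π) + (1 − 4/(3π²))·x − (8/(3π³))·x² − (16/(3π⁴))·x³ − (32/(3π⁵))·x⁴ < (2/3)·sin(x) + (1/3)·tan(x) < (1/3)·1/(π/2 − x) − 2/(3π) + (1 − 4/(3π²))·x − (8/(3π³))·x² − (16/(3π⁴))·x³. -/

import Mathlib

open Real

/-- A function vanishing at `0` with nonnegative derivative on `[0, ∞)` is nonnegative there. -/
lemma nonneg_of_hasDerivAt {f f' : ℝ → ℝ} (h0 : f 0 = 0)
    (hd : ∀ x, HasDerivAt f (f' x) x) (hf : ∀ x, 0 ≤ x → 0 ≤ f' x) (x : ℝ) (hx : 0 ≤ x) :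
    0 ≤ f x := by
  have hm : MonotoneOn f (Set.Ici 0) := by
    apply monotoneOn_of_deriv_nonneg (convex_Ici 0)
    · exact fun y _ => (hd y).continuousAt.continuousWithinAt
    · exact fun y _ => (hd y).differentiableAt.differentiableWithinAt
    · intro y hy
      rw [(hd y).deriv]
      simp only [interior_Ici, Set.mem_Ioi] at hy
      exact hf y hy.le
  have := hm (Set.mem_Ici.2 le_rfl) (Set.mem_Ici.2 hx) hx
  linarith

lemma cos_le_four (x : ℝ) (hx : 0 ≤ x) : cos x ≤ 1 - x ^ 2 / 2 + x ^ 4 / 24 := by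
  have := nonneg_of_hasDerivAt (f := fun x => 1 - x ^ 2 / 2 + x ^ 4 / 24 - cos x)
    (f' := fun x => sin x - (x - x ^ 3 / 6)) (by simp) (fun x => by
      have := ((((hasDerivAt_const x (1 : ℝ)).sub ((hasDerivAt_pow 2 x).div_const 2)).add
        ((hasDerivAt_pow 4 x).div_const 24)).sub (hasDerivAt_cos x))
      exact this.congr_deriv (by push_cast; ring)) (fun x hx => by linarith [sin_ge_sub_cube hx]) x hx
  linarith

lemma sin_le_five (x : ℝ) (hx : 0 ≤ x) : sin x ≤ x - x ^ 3 / 6 + x ^ 5 / 120 := by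
  have := nonneg_of_hasDerivAt (f := fun x => x - x ^ 3 / 6 + x ^ 5 / 120 - sin x)
    (f' := fun x => 1 - x ^ 2 / 2 + x ^ 4 / 24 - cos x) (by simp) (fun x => by
      have := ((((hasDerivAt_id x).sub ((hasDerivAt_pow 3 x).div_const 6)).add
        ((hasDerivAt_pow 5 x).div_const 120)).sub (hasDerivAt_sin x))
      exact this.congr_deriv (by push_cast; ring)) (fun x hx => by linarith [cos_le_four x hx]) x hx
  linarith

lemma cos_ge_six (x : ℝ) (hx : 0 ≤ x) :
    1 - x ^ 2 / 2 + x ^ 4 / 24 - x ^ 6 / 720 ≤ cos x := by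
  have := nonneg_of_hasDerivAt (f := fun x => cos x - (1 - x ^ 2 / 2 + x ^ 4 / 24 - x ^ 6 / 720))
    (f' := fun x => (x - x ^ 3 / 6 + x ^ 5 / 120) - sin x) (by simp) (fun x => by
      have := (hasDerivAt_cos x).sub
        ((((hasDerivAt_const x (1 : ℝ)).sub ((hasDerivAt_pow 2 x).div_const 2)).add
        ((hasDerivAt_pow 4 x).div_const 24)).sub ((hasDerivAt_pow 6 x).div_const 720))
      exact this.congr_deriv (by push_cast; ring)) (fun x hx => by linarith [sin_le_five x hx]) x hx
  linarith

lemma sin_ge_seven (x : ℝ) (hx : 0 ≤ x) :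
    x - x ^ 3 / 6 + x ^ 5 / 120 - x ^ 7 / 5040 ≤ sin x := by
  have := nonneg_of_hasDerivAt (f := fun x => sin x - (x - x ^ 3 / 6 + x ^ 5 / 120 - x ^ 7 / 5040))
    (f' := fun x => cos x - (1 - x ^ 2 / 2 + x ^ 4 / 24 - x ^ 6 / 720)) (by simp) (fun x => by
      have := (hasDerivAt_sin x).sub
        ((((hasDerivAt_id x).sub ((hasDerivAt_pow 3 x).div_const 6)).add
        ((hasDerivAt_pow 5 x).div_const 120)).sub ((hasDerivAt_pow 7 x).div_const 5040))
      exact this.congr_deriv (by push_cast; ring)) (fun x hx => by linarith [cos_ge_six x hx]) x hx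
  linarith

/-- Bernstein basis polynomials are nonnegative on `[0, a]`. -/
lemma bern_nonneg {x a : ℝ} (hx : 0 ≤ x) (ha : x ≤ a) (i j : ℕ) : 0 ≤ x ^ i * (a - x) ^ j :=
  mul_nonneg (pow_nonneg hx _) (pow_nonneg (sub_nonneg.2 ha) _)

lemma pi_lo : (157 / 50 : ℝ) ≤ π := by linarith [pi_gt_d2]
lemma pi_hi : π ≤ 22 / 7 := by linarith [pi_lt_d4]

lemma upper_small (x : ℝ) (h0 : 0 < x) (h1 : x ≤ 1) :
    2 * sin x + tan x - 3 * x < 32 * x ^ 4 / (π ^ 4 * (π - 2 * x)) := by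
  set S := x - x ^ 3 / 6 + x ^ 5 / 120 with hS
  set C := 1 - x ^ 2 / 2 + x ^ 4 / 24 - x ^ 6 / 720 with hC
  have hs : sin x ≤ S := sin_le_five x h0.le
  have hc : C ≤ cos x := cos_ge_six x h0.le
  have hx2 : x ^ 2 ≤ 1 := pow_le_one₀ h0.le h1
  have hx6 : x ^ 6 ≤ 1 := pow_le_one₀ h0.le h1
  have hCpos : 0 < C := by rw [hC]; nlinarith [pow_pos h0 4]
  have hspos : 0 < sin x := sin_pos_of_pos_of_le_one h0 h1
  have ht : tan x ≤ S / C := by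
    rw [tan_eq_sin_div_cos]
    exact div_le_div₀ (hspos.le.trans hs) hs hCpos hc
  have hl := pi_lo
  have hh := pi_hi
  have hd : 0 < π - 2 * x := by linarith
  have h3 : 32 * x ^ 4 / ((22 / 7) ^ 4 * (22 / 7 - 2 * x)) ≤ 32 * x ^ 4 / (π ^ 4 * (π - 2 * x)) := by
    gcongr
  have h4 : 2 * S + S / C - 3 * x < 32 * x ^ 4 / ((22 / 7) ^ 4 * (22 / 7 - 2 * x)) := by
    have e : 2 * S + S / C - 3 * x = (2 * S * C + S - 3 * x * C) / C := by
      field_simp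
    have hp : 0 < (22 / 7 : ℝ) ^ 4 * (22 / 7 - 2 * x) := by
      apply mul_pos (by norm_num); linarith
    rw [e, div_lt_div_iff₀ hCpos hp, hS, hC]
    have b := bern_nonneg h0.le h1
    have bp : 0 < x ^ 12 := pow_pos h0 12
    linarith [b 4 8, b 5 7, b 6 6, b 7 5, b 8 4, b 9 3, b 10 2, b 11 1]
  linarith

lemma lower_small (x : ℝ) (h0 : 0 < x) (h1 : x ≤ 1) :
    64 * x ^ 5 / (π ^ 5 * (π - 2 * x)) < 2 * sin x + tan x - 3 * x := by
  set S := x - x ^ 3 / 6 + x ^ 5 / 120 - x ^ 7 / 5040 with hS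
  set C := 1 - x ^ 2 / 2 + x ^ 4 / 24 with hC
  have hs : S ≤ sin x := sin_ge_seven x h0.le
  have hc : cos x ≤ C := cos_le_four x h0.le
  have hcpos : 0 < cos x := cos_pos_of_le_one (by rw [abs_of_pos h0]; exact h1)
  have hCpos : 0 < C := hcpos.trans_le hc
  have hspos : 0 < sin x := sin_pos_of_pos_of_le_one h0 h1
  have ht : S / C ≤ tan x := by
    rw [tan_eq_sin_div_cos]
    exact div_le_div₀ hspos.le hs hcpos hc
  have hl := pi_lo
  have hp : 0 < (157 / 50 : ℝ) ^ 5 * ((157 / 50) - 2 * x) := by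
    apply mul_pos (by norm_num); linarith
  have hd : 0 < (157 / 50) - 2 * x := by linarith
  have h3 : 64 * x ^ 5 / (π ^ 5 * (π - 2 * x)) ≤ 64 * x ^ 5 / ((157 / 50) ^ 5 * ((157 / 50) - 2 * x)) := by
    gcongr
  have h4 : 64 * x ^ 5 / ((157 / 50) ^ 5 * ((157 / 50) - 2 * x)) < 2 * S + S / C - 3 * x := by
    have e : 2 * S + S / C - 3 * x = (2 * S * C + S - 3 * x * C) / C := by
      field_simp
    rw [e, div_lt_div_iff₀ hp hCpos, hS, hC]
    have b := bern_nonneg h0.le h1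
    have bp : 0 < x ^ 12 := pow_pos h0 12
    linarith [b 5 7, b 6 6, b 7 5, b 8 4, b 9 3, b 10 2, b 11 1]
  linarith

lemma large_upper (y : ℝ) (h0 : 0 < y) (h1 : y ≤ 4 / 7) :
    2 * y * cos y + y * (cos y / sin y) - 3 * y * (π / 2 - y) < (1 - 2 * y / π) ^ 4 := by
  have hs : y - y ^ 3 / 6 ≤ sin y := sin_ge_sub_cube h0.le
  have hc := cos_le_four y h0.le
  have hspos : 0 < sin y := sin_pos_of_pos_of_le_one h0 (by linarith)
  have hy2 : y ^ 2 ≤ 1 := pow_le_one₀ h0.le (by linarith)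
  have ht : y * (cos y / sin y) ≤ 1 - y ^ 2 / 3 := by
    rw [← mul_div_assoc, div_le_iff₀ hspos]
    nlinarith [mul_le_mul_of_nonneg_left hc h0.le,
      mul_le_mul_of_nonneg_left hs (show 0 ≤ 1 - y ^ 2 / 3 by linarith), pow_pos h0 5]
  have hl := pi_lo
  have h3 : (1 - 2 * y / (157 / 50)) ^ 4 ≤ (1 - 2 * y / π) ^ 4 := by
    have : 0 ≤ 1 - 2 * y / (157 / 50) := by
      rw [sub_nonneg, div_le_one (by norm_num)]; linarith
    gcongr
  have h4 : y * (157 / 50) ≤ y * π := mul_le_mul_of_nonneg_left hl h0.le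
  have h5 := mul_le_mul_of_nonneg_left hc h0.le
  have b := bern_nonneg h0.le h1
  have bp : 0 < y ^ 5 := pow_pos h0 5
  linarith [b 1 4, b 2 3, b 3 2, b 4 1]

lemma large_lower (y : ℝ) (h0 : 0 < y) (h1 : y ≤ 4 / 7) :
    (1 - 2 * y / π) ^ 5 < 2 * y * cos y + y * (cos y / sin y) - 3 * y * (π / 2 - y) := by
  have hs := sin_le_five y h0.le
  have hc : 1 - y ^ 2 / 2 ≤ cos y := one_sub_sq_div_two_le_cos
  have hspos : 0 < sin y := sin_pos_of_pos_of_le_one h0 (by linarith)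
  have hy2 : y ^ 2 ≤ 1 / 3 := by nlinarith
  have ht : 1 - y ^ 2 / 3 - 7 / 100 * y ^ 4 ≤ y * (cos y / sin y) := by
    rw [← mul_div_assoc, le_div_iff₀ hspos]
    have q : 0 ≤ 1 - y ^ 2 / 3 - 7 / 100 * y ^ 4 := by nlinarith [sq_nonneg y]
    have h7 : y ^ 7 ≤ y ^ 5 * (1 / 3) := by
      have := mul_le_mul_of_nonneg_left hy2 (pow_pos h0 5).le
      linarith [this]
    have := mul_le_mul_of_nonneg_left hc h0.le
    have := mul_le_mul_of_nonneg_left hs q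
    linarith [pow_pos h0 5, pow_pos h0 9]
  have hl := pi_lo
  have hh := pi_hi
  have h3 : (1 - 2 * y / π) ^ 5 ≤ (1 - 2 * y / (22 / 7)) ^ 5 := by
    have : 0 ≤ 1 - 2 * y / π := by
      rw [sub_nonneg, div_le_one pi_pos]; linarith
    gcongr
  have h4 : y * π ≤ y * (22 / 7) := mul_le_mul_of_nonneg_left hh h0.le
  have h5 := mul_le_mul_of_nonneg_left hc h0.le
  have b := bern_nonneg h0.le h1
  have bp : 0 < y ^ 5 := pow_pos h0 5
  linarith [b 1 4, b 2 3, b 3 2, b 4 1]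

lemma huygens_core (x : ℝ) (h0 : 0 < x) (h1 : x < π / 2) :
    64 * x ^ 5 / (π ^ 5 * (π - 2 * x)) < 2 * sin x + tan x - 3 * x ∧
    2 * sin x + tan x - 3 * x < 32 * x ^ 4 / (π ^ 4 * (π - 2 * x)) := by
  rcases le_or_gt x 1 with h | h
  · exact ⟨lower_small x h0 h, upper_small x h0 h⟩
  · obtain ⟨y, hy⟩ : ∃ y, y = π / 2 - x := ⟨_, rfl⟩
    have hy0 : 0 < y := by linarith
    have hy1 : y ≤ 4 / 7 := by linarith [pi_hi]
    have hu := large_upper y hy0 hy1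
    have hl := large_lower y hy0 hy1
    have ec : cos y = sin x := by rw [hy, cos_pi_div_two_sub]
    have es : sin y = cos x := by rw [hy, sin_pi_div_two_sub]
    have hx : π / 2 - y = x := by linarith
    have e : 1 - 2 * y / π = 2 * x / π := by
      rw [hy]; field_simp; ring
    have hp : π - 2 * x = 2 * y := by linarith
    have em : 2 * y * cos y + y * (cos y / sin y) - 3 * y * (π / 2 - y)
        = (2 * sin x + tan x - 3 * x) * y := by
      rw [ec, es, hx, tan_eq_sin_div_cos]; ring
    rw [em, e] at hu hl
    have hpi := pi_pos
    rw [hp]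
    constructor
    · have : 64 * x ^ 5 / (π ^ 5 * (2 * y)) = (2 * x / π) ^ 5 / y := by field_simp; norm_num
      rw [this, div_lt_iff₀ hy0]; exact hl
    · have : 32 * x ^ 4 / (π ^ 4 * (2 * y)) = (2 * x / π) ^ 4 / y := by field_simp; norm_num
      rw [this, lt_div_iff₀ hy0]; exact hu

theorem huygens_rational_bounds (x : ℝ) (hx : x ∈ Set.Ioo 0 (π / 2)) :
    (1 / 3) * (1 / (π / 2 - x)) - 2 / (3 * π) + (1 - 4 / (3 * π ^ 2)) * x -
        (8 / (3 * π ^ 3)) * x ^ 2 - (16 / (3 * π ^ 4)) * x ^ 3 - (32 / (3 * π ^ 5)) * x ^ 4 <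
      (2 / 3) * sin x + (1 / 3) * tan x ∧
    (2 / 3) * sin x + (1 / 3) * tan x <
      (1 / 3) * (1 / (π / 2 - x)) - 2 / (3 * π) + (1 - 4 / (3 * π ^ 2)) * x -
        (8 / (3 * π ^ 3)) * x ^ 2 - (16 / (3 * π ^ 4)) * x ^ 3 := by
  obtain ⟨h0, h1⟩ := hx
  obtain ⟨hl, hu⟩ := huygens_core x h0 h1
  have hpi : π ≠ 0 := pi_pos.ne'
  have hd : π - 2 * x ≠ 0 := by intro h; linarith
  have hd' : π / 2 - x = (π - 2 * x) / 2 := by ring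
  have e1 : (1 / 3) * (1 / (π / 2 - x)) - 2 / (3 * π) + (1 - 4 / (3 * π ^ 2)) * x -
        (8 / (3 * π ^ 3)) * x ^ 2 - (16 / (3 * π ^ 4)) * x ^ 3
      = x + (1 / 3) * (32 * x ^ 4 / (π ^ 4 * (π - 2 * x))) := by
    rw [hd']; field_simp; ring
  have e2 : x + (1 / 3) * (32 * x ^ 4 / (π ^ 4 * (π - 2 * x))) - (32 / (3 * π ^ 5)) * x ^ 4
      = x + (1 / 3) * (64 * x ^ 5 / (π ^ 5 * (π - 2 * x))) := by
    obtain ⟨w, hw⟩ : ∃ w, w = π - 2 * x := ⟨_, rfl⟩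
    have hx : x = (π - w) / 2 := by linarith
    rw [← hw] at hd ⊢
    rw [hx]
    field_simp
    ring
  rw [e1, e2]
  constructor <;> linarith
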